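/- Fix δ > 0, β > 0 and ε > 0. Then there exist η > 0 and n₀ such that the following holds for all n ≥ n₀: let p, k satisfy p ∈ [δ, 1−δ] and k/n ∈ [δ, 1−δ], let a, t be positive integers with t ≤ k/2 and a ≤ t^{3/2}·n^{2β−1/2}, and set m = ⌊(n−k+t)/t⌋, Y ~ Bin((k−t)t + t(t−1)/2, p). Then with probability at least 1 − exp(−n^η) over G = G_{n,p}: for every interval A = [z, z+a), the proportion of (k−t)-element sets S' ⊆ [n] failing the inequality |P_T(e(S'∪T) − e(S') ∈ A) − P(Y ∈ A)| ≤ Δ_A + e^{−n^ε/2} is at most e^{−n^ε/4}, where for each such S', T is a uniformly random t-element subset of [n]∖S', and Δ_A = e^{−n^ε}/m if P(Y ∈ A) ≤ e^{−n^ε}/m and Δ_A = n^{β+ε}/m otherwise. -/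

import Mathlib

/-!
Fix `S`. When a `t`-set `T` disjoint from `S` is added, the number of edges gained is the number of
edges of `G` among `ν = #S * t + t(t-1)/2` potential edges, so it is `Bin(ν, p)`; for disjoint sets
`T₁, …, T_m` these potential edges are disjoint and the counts are independent. Hence the number `Z`
of indices `i` whose count lies in `A` is a sum of `m` independent indicators of mean
`q = P(Y ∈ A)`.

* If `q ≤ e^{-n^ε}/m`, then `Z = 0` outside an event of probability `e^{-n^ε}`.
* In general `q ≤ a / √((ν+1)p(1-p))`, so that `Z` has mean `O(n^{2β})`, and Chernoff's bound with
  parameter `θ = n^{-β}` shows that `Z` deviates from its mean by more than `n^{β+ε}` with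
  probability `O(e^{-n^ε})`.

The bound on `q` comes from the partial first moments of `Bin(ν+1, p)`: their deviation from the
mean telescopes to `(ν+1)p(1-p)` times a point probability of `Bin(ν, p)`, while by Cauchy–Schwarz
it is at most the standard deviation.

Moving a fixed family of `m` disjoint `t`-sets by a random permutation of the complement of `S`
exhibits `P_T(e(S ∪ T) - e(S) ∈ A)` as the average of `Z/m`. Therefore its distance to `q` is at
most `Δ_A` plus the proportion of atypical permutations. This proportion has mean `O(e^{-n^ε})`, and
two applications of Markov's inequality, over the permutations and over `S`, cost a factor
`e^{3n^ε/4}`. Finally, edge counts are integers below `n²`, so only `O(n⁴)` intervals have to be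
considered, and a union bound finishes the proof with `η = ε/2`.
-/

open Finset MeasureTheory ProbabilityTheory

noncomputable section

/-- Uniform probability of an event `P` over a finite sample space `Ω`. -/
def Pru {α : Type*} (Ω : Finset α) (P : α → Prop) : ℝ := by
  classical exact ((Ω.filter P).card : ℝ) / Ω.card

/-- Expectation of `f` under the uniform distribution on `Ω`. -/
def Exu {α : Type*} (Ω : Finset α) (f : α → ℝ) : ℝ := (∑ a ∈ Ω, f a) / Ω.card

/-- Variance of `f` under the uniform distribution on `Ω`. -/
def Varu {α : Type*} (Ω : Finset α) (f : α → ℝ) : ℝ := Exu Ω (fun a => (f a - Exu Ω f) ^ 2)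

/-- Conditional expectation of `f` given the value of `g`, under uniform distribution on `Ω`. -/
def condExpU {α β : Type*} (Ω : Finset α) (f : α → ℝ) (g : α → β) (ω : α) : ℝ := by
  classical exact Exu (Ω.filter (fun ω' => g ω' = g ω)) f

/-- The edge set of the complete graph on `[n]`. -/
def completeEdges (n : ℕ) : Finset (Sym2 (Fin n)) := by
  classical exact Finset.univ.filter (fun e => ¬ e.IsDiag)

/-- A finset of `Sym2`s is a graph if it has no loops. -/
def IsGraph {n : ℕ} (G : Finset (Sym2 (Fin n))) : Prop := ∀ e ∈ G, ¬ e.IsDiag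

/-- The sample space of `G_{n,M}`: all graphs on `[n]` with exactly `M` edges. -/
def graphsM (n M : ℕ) : Finset (Finset (Sym2 (Fin n))) := by
  classical exact (completeEdges n).powerset.filter (fun G => G.card = M)

/-- `e(S)`: number of edges of `G` with both endpoints in `S`. -/
def edgesIn {n : ℕ} (G : Finset (Sym2 (Fin n))) (S : Finset (Fin n)) : ℕ := by
  classical exact (G.filter (fun e => ∀ v ∈ e, v ∈ S)).card

/-- `d_S(v)`: number of neighbours of `v` (in graph `G`) lying in `S`. -/
def dS {n : ℕ} (G : Finset (Sym2 (Fin n))) (S : Finset (Fin n)) (v : Fin n) : ℕ := by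
  classical exact (S.filter (fun w => s(v, w) ∈ G)).card

/-- All `k`-element subsets of `[n]`. -/
def kSets (n k : ℕ) : Finset (Finset (Fin n)) := Finset.univ.powersetCard k

/-- Probability of an event under the uniform random graph `G_{n,M}`. -/
def PrGnM (n M : ℕ) (P : Finset (Sym2 (Fin n)) → Prop) : ℝ := Pru (graphsM n M) P

/-- Probability of an event under the binomial random graph `G_{n,p}`. -/
def PrGnp (n : ℕ) (p : ℝ) (P : Finset (Sym2 (Fin n)) → Prop) : ℝ := by
  classical exact ∑ G ∈ (completeEdges n).powerset,
    if (P G) then p ^ G.card * (1 - p) ^ ((completeEdges n).card - G.card) else 0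

/-- `N = n(n-1)/2` as a real number. -/
def Nr (n : ℕ) : ℝ := (n : ℝ) * ((n : ℝ) - 1) / 2

/-- `K = k(k-1)/2` as a real number. -/
def Kr (k : ℕ) : ℝ := (k : ℝ) * ((k : ℝ) - 1) / 2

/-- `λ = ((n²-k²)k²/(2n⁴))·(M(N-M)/N²)`. -/
def lamP (n M k : ℕ) : ℝ :=
  (((n:ℝ)^2 - (k:ℝ)^2) * (k:ℝ)^2 / (2 * (n:ℝ)^4)) * ((M:ℝ) * (Nr n - (M:ℝ)) / (Nr n)^2)

/-- The mean `K·M/N`. -/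
def muP (n M k : ℕ) : ℝ := Kr k * (M:ℝ) / Nr n

/-- `W = (e(S) - K·M/N)/n`. -/
def Wfun (n M k : ℕ) (G : Finset (Sym2 (Fin n))) (S : Finset (Fin n)) : ℝ :=
  ((edgesIn G S : ℝ) - muP n M k) / n

/-- `V = Σ_v d(v)² - n·d(G)²`, i.e. `n` times the degree variance. -/
def Vdeg {n : ℕ} (G : Finset (Sym2 (Fin n))) : ℝ :=
  (∑ v : Fin n, (dS G Finset.univ v : ℝ) ^ 2) - (n:ℝ) * (2 * (G.card : ℝ) / n) ^ 2

/-- Gaussian CDF with mean `m` and variance `v`. -/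
def gaussCdf (m v z : ℝ) : ℝ := ((gaussianReal m v.toNNReal) (Set.Iic z)).toReal

/-- Gaussian measure of a set, mean `m`, variance `v`. -/
def gaussMeas (m v : ℝ) (A : Set ℝ) : ℝ := ((gaussianReal m v.toNNReal) A).toReal

/-- Gaussian density with mean `m` and variance `v`. -/
def gaussPdf (m v x : ℝ) : ℝ := gaussianPDFReal m v.toNNReal x

/-- `P(Y ∈ ·)` for `Y ~ Bin(ν, p)`. -/
def binomPr (ν : ℕ) (p : ℝ) (P : ℕ → Prop) : ℝ := by
  classical exact ∑ j ∈ Finset.range (ν + 1),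
    if (P j) then (ν.choose j : ℝ) * p ^ j * (1 - p) ^ (ν - j) else 0

/-- Sample space for "uniform `k`-set `S`, then uniform `x ∈ S` and `x̄ ∈ S̄`". -/
def SwapΩ (n k : ℕ) : Finset (Σ _ : Finset (Fin n), Fin n × Fin n) :=
  (kSets n k).sigma (fun S => S ×ˢ Sᶜ)

/-- A triple `(a, r, t)` is valid for `β`. -/
def ValidTriple (β : ℝ) (n a r t : ℕ) : Prop :=
  a ≤ r ∧
  (∃ c : ℝ, 1/2 ≤ c ∧ c ≤ 1 ∧ (a : ℝ) = c * (t:ℝ) ^ ((3:ℝ)/2) * (n:ℝ) ^ (2*β - 1/2)) ∧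
  (r : ℝ) ≤ (n:ℝ) ^ (-β) * Real.sqrt ((n:ℝ) * (t:ℝ))

open scoped BigOperators

lemma Pru_eq_expect {α : Type*} (K : Finset α) (P : α → Prop) :
    Pru K P = 𝔼 a ∈ K, {a | P a}.indicator (1 : α → ℝ) a := by
  classical
  rw [expect_eq_sum_div_card]
  simp [Pru, Set.indicator_apply]

lemma Pru_nonneg {α : Type*} (K : Finset α) (P : α → Prop) : 0 ≤ Pru K P :=
  div_nonneg (Nat.cast_nonneg _) (Nat.cast_nonneg _)

lemma Pru_le_one {α : Type*} (K : Finset α) (P : α → Prop) : Pru K P ≤ 1 := by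
  classical
  exact div_le_one_of_le₀ (mod_cast card_le_card (filter_subset _ _)) (Nat.cast_nonneg _)

lemma Pru_mono {α : Type*} {K : Finset α} {P Q : α → Prop} (h : ∀ a ∈ K, P a → Q a) :
    Pru K P ≤ Pru K Q := by
  classical
  unfold Pru
  gcongr with a ha
  exact h a ha

lemma Pru_congr {α : Type*} {K : Finset α} {P Q : α → Prop} (h : ∀ a ∈ K, P a ↔ Q a) :
    Pru K P = Pru K Q :=
  (Pru_mono fun a ha => (h a ha).1).antisymm (Pru_mono fun a ha => (h a ha).2)

lemma measureReal_lt_Pru_le {α Ω : Type*} {mΩ : MeasurableSpace Ω} {μ : Measure Ω}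
    [IsFiniteMeasure μ] {K : Finset α} {P : α → Ω → Prop} {γ Q : ℝ} (hγ : 0 < γ) (hQ : 0 ≤ Q)
    (hP : ∀ a ∈ K, MeasurableSet {ω | P a ω}) (hPQ : ∀ a ∈ K, μ.real {ω | P a ω} ≤ Q) :
    μ.real {ω | γ < Pru K (P · ω)} ≤ Q / γ := by
  have hint : ∀ a ∈ K, Integrable ({ω | P a ω}.indicator (1 : Ω → ℝ)) μ := fun a ha =>
    (integrable_const 1).indicator (hP a ha)
  have hPru : (fun ω => Pru K (P · ω)) =
      fun ω => (∑ a ∈ K, {ω | P a ω}.indicator (1 : Ω → ℝ) ω) / #K := by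
    funext ω
    rw [Pru_eq_expect, expect_eq_sum_div_card]
    rfl
  have hmean : ∫ ω, Pru K (P · ω) ∂μ ≤ Q := by
    rw [hPru, integral_div, integral_finsetSum _ hint]
    refine div_le_of_le_mul₀ (Nat.cast_nonneg _) hQ ?_
    rw [mul_comm, ← nsmul_eq_mul]
    refine sum_le_card_nsmul _ _ _ fun a ha => ?_
    rw [integral_indicator_one (hP a ha)]
    exact hPQ a ha
  rw [le_div_iff₀' hγ]
  calc γ * μ.real {ω | γ < Pru K (P · ω)} ≤ γ * μ.real {ω | γ ≤ Pru K (P · ω)} :=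
        mul_le_mul_of_nonneg_left (measureReal_mono fun _ => le_of_lt (a := γ)) hγ.le
    _ ≤ ∫ ω, Pru K (P · ω) ∂μ := mul_meas_ge_le_integral_of_nonneg
        (ae_of_all _ fun ω => Pru_nonneg _ _)
        (hPru ▸ (integrable_finsetSum _ hint).div_const _) γ
    _ ≤ Q := hmean

lemma abs_expect_sub_le {ι : Type*} [Fintype ι] [Nonempty ι] {f : ι → ℝ} {q Δ : ℝ}
    (hf : ∀ i, f i ∈ Set.Icc 0 1) (hq : q ∈ Set.Icc 0 1) (hΔ : 0 ≤ Δ) :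
    |𝔼 i, f i - q| ≤ Δ + Pru univ (fun i => Δ < |f i - q|) := by
  have hi : ∀ i, |f i - q| ≤ Δ + {i | Δ < |f i - q|}.indicator 1 i := by
    intro i
    by_cases h : Δ < |f i - q|
    · have : |f i - q| ≤ 1 := abs_sub_le_of_le_of_le (hf i).1 (hf i).2 hq.1 hq.2 |>.trans (by simp)
      rw [Set.indicator_of_mem (by exact h), Pi.one_apply]
      linarith
    · rw [Set.indicator_of_notMem (by exact h), add_zero]
      exact not_lt.1 h
  calc |𝔼 i, f i - q| = |𝔼 i, (f i - q)| := by rw [expect_sub_distrib, Fintype.expect_const]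
    _ ≤ 𝔼 i, |f i - q| := abs_expect_le _ _
    _ ≤ 𝔼 i, (Δ + {i | Δ < |f i - q|}.indicator 1 i) := expect_le_expect fun i _ => hi i
    _ = _ := by rw [expect_add_distrib, Fintype.expect_const, Pru_eq_expect]

/-! ### Concentration of sums of independent indicators -/

section Chernoff

variable {ι Ω : Type*} {mΩ : MeasurableSpace Ω} {μ : Measure Ω}

lemma mgf_indicator_one_le [IsProbabilityMeasure μ] {A : Set Ω} (hA : MeasurableSet A) {θ : ℝ}
    (hθ : |θ| ≤ 1) : mgf (A.indicator 1) μ θ ≤ Real.exp (μ.real A * (θ + θ ^ 2)) := by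
  have hexp : (fun ω => Real.exp (θ * A.indicator 1 ω)) =
      fun ω => 1 + A.indicator (fun _ => Real.exp θ - 1) ω := by
    funext ω
    by_cases h : ω ∈ A <;> simp [h]
  have hmgf : mgf (A.indicator 1) μ θ = 1 + μ.real A * (Real.exp θ - 1) := by
    rw [mgf, hexp, integral_add (integrable_const 1) ((integrable_const _).indicator hA),
      integral_indicator_const _ hA]
    simp
  have hθ2 : Real.exp θ - 1 ≤ θ + θ ^ 2 := by
    linarith [(abs_le.1 (Real.abs_exp_sub_one_sub_id_le hθ)).2]
  calc mgf (A.indicator 1) μ θ ≤ μ.real A * (θ + θ ^ 2) + 1 := by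
        rw [hmgf, add_comm]
        gcongr
    _ ≤ _ := Real.add_one_le_exp _

variable [Fintype ι] {A : ι → Set Ω}

lemma mgf_sum_indicator_one_le (hA : ∀ i, MeasurableSet (A i)) (hind : iIndepSet A μ) {θ : ℝ}
    (hθ : |θ| ≤ 1) :
    mgf (fun ω => ∑ i, (A i).indicator 1 ω) μ θ ≤
      Real.exp ((∑ i, μ.real (A i)) * (θ + θ ^ 2)) := by
  have hfun : iIndepFun (fun i => (A i).indicator (1 : Ω → ℝ)) μ := hind.iIndepFun_indicator
  have := hind.isProbabilityMeasure
  have hsum := hfun.mgf_sum (t := θ)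
    (fun i => measurable_one.indicator (hA i)) univ
  rw [sum_fn] at hsum
  rw [hsum, sum_mul, Real.exp_sum]
  exact prod_le_prod (fun i _ => mgf_nonneg) fun i _ => mgf_indicator_one_le (hA i) hθ

theorem measureReal_lt_abs_sum_indicator_sub_le (hA : ∀ i, MeasurableSet (A i))
    (hind : iIndepSet A μ) {θ : ℝ} (hθ0 : 0 ≤ θ) (hθ1 : θ ≤ 1) (s : ℝ) :
    μ.real {ω | s < |∑ i, (A i).indicator 1 ω - ∑ i, μ.real (A i)|} ≤
      2 * Real.exp (θ ^ 2 * ∑ i, μ.real (A i) - θ * s) := by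
  have := hind.isProbabilityMeasure
  set X : Ω → ℝ := fun ω => ∑ i, (A i).indicator 1 ω
  set M := ∑ i, μ.real (A i)
  have hint (θ : ℝ) : Integrable (fun ω => Real.exp (θ * X ω)) μ := by
    refine integrable_exp_mul_of_mem_Icc (a := 0) (b := Fintype.card ι)
      (Finset.measurable_fun_sum _ fun i _ => measurable_one.indicator (hA i)).aemeasurable
      (ae_of_all _ fun ω => ⟨sum_nonneg fun i _ => Set.indicator_nonneg (by simp) ω, ?_⟩)
    calc X ω ≤ ∑ _i : ι, (1 : ℝ) :=
          sum_le_sum fun i _ => Set.indicator_le_self' (by simp) ω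
      _ = Fintype.card ι := by simp
  have hupper : μ.real {ω | M + s ≤ X ω} ≤ Real.exp (θ ^ 2 * M - θ * s) :=
    calc _ ≤ Real.exp (-θ * (M + s)) * mgf X μ θ := measure_ge_le_exp_mul_mgf _ hθ0 (hint θ)
      _ ≤ Real.exp (-θ * (M + s)) * Real.exp (M * (θ + θ ^ 2)) := by
          gcongr
          exact mgf_sum_indicator_one_le hA hind (abs_le.2 ⟨by linarith, hθ1⟩)
      _ = _ := by rw [← Real.exp_add]; ring_nf
  have hlower : μ.real {ω | X ω ≤ M - s} ≤ Real.exp (θ ^ 2 * M - θ * s) :=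
    calc _ ≤ Real.exp (-(-θ) * (M - s)) * mgf X μ (-θ) :=
          measure_le_le_exp_mul_mgf _ (neg_nonpos.2 hθ0) (hint (-θ))
      _ ≤ Real.exp (-(-θ) * (M - s)) * Real.exp (M * (-θ + (-θ) ^ 2)) := by
          gcongr
          exact mgf_sum_indicator_one_le hA hind (abs_le.2 ⟨by linarith, by linarith⟩)
      _ = _ := by rw [← Real.exp_add]; ring_nf
  calc _ ≤ μ.real ({ω | M + s ≤ X ω} ∪ {ω | X ω ≤ M - s}) := by
        refine measureReal_mono fun ω (hω : s < |X ω - M|) => ?_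
        rcases lt_abs.1 hω with h | h
        · exact Or.inl (show M + s ≤ X ω by linarith)
        · exact Or.inr (show X ω ≤ M - s by linarith)
    _ ≤ _ := (measureReal_union_le _ _).trans (by linarith)

end Chernoff

/-- The tolerance `Δ_A` for an event of probability `q`: up to the factor `1 / m`, it is `e^{-n^ε}`
when the expected number `m q` of successes in `m` trials is below `e^{-n^ε}`, and `n^{β+ε}`
otherwise. -/
def tolerance (n m : ℕ) (β ε q : ℝ) : ℝ :=
  if q ≤ Real.exp (-(n : ℝ) ^ ε) / m then Real.exp (-(n : ℝ) ^ ε) / m else (n : ℝ) ^ (β + ε) / m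

lemma tolerance_nonneg (n m : ℕ) (β ε q : ℝ) : 0 ≤ tolerance n m β ε q := by
  unfold tolerance
  split_ifs <;> positivity

section Tolerance

variable {ι Ω : Type*} [Fintype ι] [Nonempty ι] {mΩ : MeasurableSpace Ω} {μ : Measure Ω}
  {A : ι → Set Ω} {n : ℕ} {β ε q C : ℝ}

lemma measureReal_div_card_lt_abs_Pru_sub_le [IsFiniteMeasure μ] {c : ℝ}
    (hAq : ∀ i, μ.real (A i) = q) (hq : q ≤ c / Fintype.card ι) :
    μ.real {ω | c / Fintype.card ι < |Pru univ (fun i => ω ∈ A i) - q|} ≤ c := by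
  have hq0 : 0 ≤ q := hAq (Classical.arbitrary ι) ▸ measureReal_nonneg
  have hsub : {ω | c / Fintype.card ι < |Pru univ (fun i => ω ∈ A i) - q|} ⊆ ⋃ i, A i := by
    intro ω hω
    by_contra hnot
    have hnone : ∀ i, ω ∉ A i := by simpa using hnot
    have hPru : Pru univ (fun i => ω ∈ A i) = 0 := by simp [Pru, hnone]
    have hlt : c / Fintype.card ι < |Pru univ (fun i => ω ∈ A i) - q| := hω
    rw [hPru, zero_sub, abs_neg, abs_of_nonneg hq0] at hlt
    exact hlt.not_ge hq
  calc _ ≤ μ.real (⋃ i, A i) := measureReal_mono hsub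
    _ ≤ ∑ i, μ.real (A i) := measureReal_iUnion_fintype_le _
    _ = Fintype.card ι * q := by simp [hAq]
    _ ≤ c := by rwa [← le_div_iff₀' (by positivity)]

lemma measureReal_rpow_div_lt_abs_Pru_sub_le (hn : 1 ≤ n) (hβ : 0 ≤ β)
    (hA : ∀ i, MeasurableSet (A i)) (hind : iIndepSet A μ) (hAq : ∀ i, μ.real (A i) = q)
    (hmean : Fintype.card ι * q ≤ C * (n : ℝ) ^ (2 * β)) :
    μ.real {ω | (n : ℝ) ^ (β + ε) / Fintype.card ι < |Pru univ (fun i => ω ∈ A i) - q|} ≤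
      2 * Real.exp (C - (n : ℝ) ^ ε) := by
  have hn0 : (0 : ℝ) < n := by positivity
  have hsum : ∑ i, μ.real (A i) = Fintype.card ι * q := by simp [hAq]
  set θ : ℝ := (n : ℝ) ^ (-β)
  have hθs : θ * (n : ℝ) ^ (β + ε) = (n : ℝ) ^ ε := by
    rw [← Real.rpow_add hn0, neg_add_cancel_left]
  have hθM : θ ^ 2 * (Fintype.card ι * q) ≤ C := by
    calc _ ≤ θ ^ 2 * (C * (n : ℝ) ^ (2 * β)) := by gcongr
      _ = C := by
        rw [mul_left_comm, ← Real.rpow_mul_natCast hn0.le, ← Real.rpow_add hn0]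
        simp [mul_comm]
  calc _ = μ.real {ω | (n : ℝ) ^ (β + ε) <
          |∑ i, (A i).indicator 1 ω - ∑ i, μ.real (A i)|} := by
        congr 1 with ω
        have hcard : (0 : ℝ) < Fintype.card ι := by positivity
        have : ∑ i, (A i).indicator 1 ω - ∑ i, μ.real (A i) =
            (Pru univ (fun i => ω ∈ A i) - q) * Fintype.card ι := by
          rw [hsum, Pru_eq_expect, Fintype.expect_eq_sum_div_card]
          field_simp
          rfl
        rw [Set.mem_ofPred_eq, Set.mem_ofPred_eq, this, abs_mul, abs_of_pos hcard,
          div_lt_iff₀ hcard]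
    _ ≤ 2 * Real.exp (θ ^ 2 * ∑ i, μ.real (A i) - θ * (n : ℝ) ^ (β + ε)) :=
        measureReal_lt_abs_sum_indicator_sub_le hA hind (by positivity)
          (Real.rpow_le_one_of_one_le_of_nonpos (mod_cast hn) (neg_nonpos.2 hβ)) _
    _ ≤ _ := by
        rw [hsum, hθs]
        gcongr

lemma measureReal_tolerance_lt_abs_Pru_sub_le (hn : 1 ≤ n) (hβ : 0 ≤ β)
    (hA : ∀ i, MeasurableSet (A i)) (hind : iIndepSet A μ) (hAq : ∀ i, μ.real (A i) = q)
    (hmean : Fintype.card ι * q ≤ C * (n : ℝ) ^ (2 * β)) :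
    μ.real {ω | tolerance n (Fintype.card ι) β ε q < |Pru univ (fun i => ω ∈ A i) - q|} ≤
      2 * Real.exp (C - (n : ℝ) ^ ε) := by
  have := hind.isProbabilityMeasure
  have hq0 : 0 ≤ q := hAq (Classical.arbitrary ι) ▸ measureReal_nonneg
  have hC : 0 ≤ C :=
    nonneg_of_mul_nonneg_left (hmean.trans' (by positivity)) (by positivity)
  unfold tolerance
  split_ifs with h
  · refine (measureReal_div_card_lt_abs_Pru_sub_le hAq h).trans ?_
    have : Real.exp (-(n : ℝ) ^ ε) ≤ Real.exp (C - (n : ℝ) ^ ε) := by gcongr; linarith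
    linarith [Real.exp_pos (-(n : ℝ) ^ ε)]
  · exact measureReal_rpow_div_lt_abs_Pru_sub_le hn hβ hA hind hAq hmean

end Tolerance

/-! ### Traces of a Bernoulli random set -/

lemma iIndepFun_restrict {ι κ Ω : Type*} {X : ι → Type*} {mΩ : MeasurableSpace Ω}
    {mX : ∀ i, MeasurableSpace (X i)} {μ : Measure Ω} {f : ∀ i, Ω → X i} (hf : iIndepFun f μ)
    (hfm : ∀ i, Measurable (f i)) {F : κ → Set ι} (hF : Pairwise (Function.onFun Disjoint F)) :
    iIndepFun (fun k ω (i : F k) => f i ω) μ := by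
  have := hf.isProbabilityMeasure
  have hinj (k : κ) : Function.Injective (Subtype.val : F k → ι) := Subtype.val_injective
  have hinjSigma : Function.Injective (fun q : Σ k, F k => (q.2 : ι)) := by
    rintro ⟨k, i, hi⟩ ⟨l, j, hj⟩ (rfl : i = j)
    obtain rfl : k = l := by
      by_contra hkl
      exact Set.disjoint_left.1 (hF hkl) hi hj
    rfl
  have (i : ι) : IsProbabilityMeasure (μ.map (f i)) :=
    Measure.isProbabilityMeasure_map (hfm i).aemeasurable
  rw [iIndepFun_iff_map_fun_eq_infinitePi_map fun k => by fun_prop]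
  calc μ.map (fun ω k (i : F k) => f i ω)
      = (μ.map fun ω (q : Σ k, F k) => f q.2 ω).map
          (MeasurableEquiv.piCurry fun k (i : F k) => X i) := by
        rw [Measure.map_map (by fun_prop) (by fun_prop)]
        rfl
    _ = Measure.infinitePi fun k => Measure.infinitePi fun i : F k => μ.map (f i) := by
        rw [(hf.precomp hinjSigma).map_fun_eq_infinitePi_map fun q => hfm _]
        exact Measure.infinitePi_map_piCurry fun k (i : F k) => μ.map (f i)
    _ = _ := by
        congr 1 with k : 1
        exact ((hf.precomp (hinj k)).map_fun_eq_infinitePi_map fun i => hfm _).symm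

lemma measurable_set_inter_right {ι : Type*} (v : Set ι) : Measurable fun s : Set ι => s ∩ v :=
  measurable_set_iff.2 fun i => (measurable_set_mem i).and measurable_const

section SetBernoulli

variable {ι κ : Type*} (u : Set ι) (p : unitInterval)

lemma iIndepFun_mem_setBernoulli :
    iIndepFun (fun (i : ι) (s : Set ι) => i ∈ s) setBer(u, p) := by
  have hset : Measurable fun x : ι → Prop => {i | x i} :=
    measurable_set_iff.2 fun i => measurable_pi_apply i
  have hmem : Measurable fun (s : Set ι) i => i ∈ s := measurable_pi_iff.2 measurable_set_mem
  have hmarginal (i : ι) : setBer(u, p).map (fun s => i ∈ s) =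
      unitInterval.toNNReal p • Measure.dirac (i ∈ u) +
        unitInterval.toNNReal (unitInterval.symm p) • Measure.dirac False := by
    rw [setBernoulli_eq_map, Measure.map_map (measurable_set_mem i) hset]
    exact Measure.infinitePi_map_eval _ i
  simp only [iIndepFun_iff_map_fun_eq_infinitePi_map measurable_set_mem, hmarginal]
  rw [setBernoulli_eq_map, Measure.map_map hmem hset]
  exact Measure.map_id

lemma iIndepFun_inter_setBernoulli {F : κ → Set ι} (hF : Pairwise (Function.onFun Disjoint F)) :
    iIndepFun (fun k (s : Set ι) => s ∩ F k) setBer(u, p) := by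
  have himage (k : κ) : Measurable fun x : F k → Prop => {i | ∃ h : i ∈ F k, x ⟨i, h⟩} := by
    refine measurable_set_iff.2 fun i => ?_
    by_cases h : i ∈ F k
    · simpa [h] using measurable_pi_apply (⟨i, h⟩ : F k)
    · simp [h]
  convert (iIndepFun_restrict (iIndepFun_mem_setBernoulli u p) measurable_set_mem hF).comp _ himage
    using 3 with k s
  ext i
  simp [and_comm]

lemma map_inter_setBernoulli (v : Set ι) : setBer(u, p).map (· ∩ v) = setBer(u ∩ v, p) := by
  have hset : Measurable fun x : ι → Prop => {i | x i} :=
    measurable_set_iff.2 fun i => measurable_pi_apply i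
  have hand (i : ι) : Measurable fun x : Prop => x ∧ i ∈ v := .of_discrete
  rw [setBernoulli_eq_map, setBernoulli_eq_map, Measure.map_map (measurable_set_inter_right v) hset]
  calc (Measure.infinitePi _).map (fun x : ι → Prop => {i | x i} ∩ v)
      = ((Measure.infinitePi _).map fun (x : ι → Prop) i => x i ∧ i ∈ v).map
          fun x => {i | x i} := by
        rw [Measure.map_map hset (by fun_prop)]
        rfl
    _ = _ := by
        rw [Measure.infinitePi_map_pi _ hand]
        congr 2 with i : 1
        rw [Measure.map_add _ _ (hand i), Measure.map_smul, Measure.map_smul,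
          Measure.map_dirac' (hand i), Measure.map_dirac' (hand i)]
        simp

variable [Countable ι]

lemma map_ncard_inter_setBernoulli {F : Set ι} (hF : F.Finite) :
    setBer(u, p).map (fun s => (s ∩ F).ncard) = Bin((u ∩ F).ncard, p) := by
  refine Measure.ext_of_measureReal_singleton fun j => ?_
  rw [binomial_real_singleton, ← map_ncard_setBernoulli_real_singleton (hF.inter_of_right u),
    ← map_inter_setBernoulli, Measure.map_map measurable_ncard (measurable_set_inter_right F)]
  rfl

lemma iIndepSet_ncard_inter_setBernoulli {F : κ → Set ι}
    (hF : Pairwise (Function.onFun Disjoint F)) (B : Set ℕ) :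
    iIndepSet (fun k => {s | (s ∩ F k).ncard ∈ B}) setBer(u, p) := by
  have hB : MeasurableSet {s : Set ι | s.ncard ∈ B} := measurable_ncard .of_discrete
  have hpre (k : κ) := measurable_set_inter_right (F k) hB
  exact (iIndepSet_iff_meas_biInter hpre).2 fun K =>
    (iIndepFun_inter_setBernoulli u p hF).meas_biInter fun k _ => ⟨_, hB, rfl⟩

end SetBernoulli

lemma PrGnp_eq_setBernoulli_real (n : ℕ) (p : unitInterval) (P : Finset (Sym2 (Fin n)) → Prop) :
    PrGnp n p P = setBer((completeEdges n : Set (Sym2 (Fin n))), p).real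
      {s | P s.toFinite.toFinset} := by
  classical
  have hset : {s : Set (Sym2 (Fin n)) | P s.toFinite.toFinset ∧ s ⊆ completeEdges n} =
      ↑(({G ∈ (completeEdges n).powerset | P G}).image
        ((↑) : Finset (Sym2 (Fin n)) → Set (Sym2 (Fin n)))) := by
    ext s
    lift s to Finset (Sym2 (Fin n)) using s.toFinite
    simp [and_comm]
  rw [measureReal_def, setBernoulli_apply_eq_apply_subsets, ← measureReal_def]
  simp only [Set.mem_ofPred_eq, hset]
  rw [← sum_measureReal_singleton, Finset.sum_image Finset.coe_injective.injOn, Finset.sum_filter]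
  refine Finset.sum_congr rfl fun G hG => ?_
  rw [setBernoulli_real_singleton p (by simpa using hG) (Finset.finite_toSet _),
    ← Finset.coe_sdiff, Set.ncard_coe_finset, Set.ncard_coe_finset,
    Finset.card_sdiff_of_subset (by simpa using hG)]

lemma binomPr_eq_binomial_real (ν : ℕ) (p : unitInterval) (P : ℕ → Prop) :
    binomPr ν p P = Bin(ν, p).real {j | P j} := by
  classical
  rw [← integral_indicator_one .of_discrete, integral_binomial]
  simp [binomPr, Nat.range_succ_eq_Iic, Set.indicator_apply]

/-! ### Anticoncentration of the binomial distribution -/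

section Bernstein

open Polynomial

variable {R : Type*} [CommRing R]

lemma succ_mul_bernsteinPolynomial_succ_succ (n j : ℕ) :
    ((j : R[X]) + 1) * bernsteinPolynomial R (n + 1) (j + 1) =
      ((n : R[X]) + 1) * X * bernsteinPolynomial R n j := by
  have hchoose : ((n : R[X]) + 1) * n.choose j = (n + 1).choose (j + 1) * (j + 1) := by
    exact_mod_cast congrArg (Nat.cast : ℕ → R[X]) (Nat.add_one_mul_choose_eq n j)
  simp only [bernsteinPolynomial, Nat.add_sub_add_right]
  linear_combination -(X ^ (j + 1) * (1 - X) ^ (n - j)) * hchoose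

lemma bernsteinPolynomial_succ_succ (n j : ℕ) :
    bernsteinPolynomial R (n + 1) (j + 1) =
      X * bernsteinPolynomial R n j + (1 - X) * bernsteinPolynomial R n (j + 1) := by
  obtain hj | hj := lt_or_ge j n
  · have hsub : n - j = n - (j + 1) + 1 := by omega
    simp only [bernsteinPolynomial, Nat.choose_succ_succ, Nat.add_sub_add_right, hsub]
    push_cast
    ring
  · rw [bernsteinPolynomial.eq_zero_of_lt R (Nat.lt_add_one_of_le hj)]
    simp only [bernsteinPolynomial, Nat.choose_succ_succ, Nat.add_sub_add_right,
      Nat.choose_eq_zero_of_lt (Nat.lt_add_one_of_le hj)]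
    push_cast
    ring

lemma sum_range_sub_mul_bernsteinPolynomial (n J : ℕ) :
    ∑ j ∈ range (J + 1), (((n : R[X]) + 1) * X - (j : R[X])) * bernsteinPolynomial R (n + 1) j =
      ((n : R[X]) + 1) * X * (1 - X) * bernsteinPolynomial R n J := by
  induction J with
  | zero =>
    simp only [zero_add, sum_range_one, bernsteinPolynomial, Nat.choose_zero_right, Nat.cast_one,
      Nat.cast_zero, pow_zero, tsub_zero]
    ring
  | succ J ih =>
    rw [sum_range_succ, ih]
    push_cast
    linear_combination ((n : R[X]) + 1) * X * bernsteinPolynomial_succ_succ (R := R) n J -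
      succ_mul_bernsteinPolynomial_succ_succ (R := R) n J

end Bernstein

lemma bernsteinPolynomial_eval_nonneg (n j : ℕ) (x : unitInterval) :
    0 ≤ (bernsteinPolynomial ℝ n j).eval (x : ℝ) := by
  have := x.2.1
  have := sub_nonneg.2 x.2.2
  simp only [bernsteinPolynomial, Polynomial.eval_mul, Polynomial.eval_natCast,
    Polynomial.eval_pow, Polynomial.eval_X, Polynomial.eval_sub, Polynomial.eval_one]
  positivity

lemma sq_sum_sub_mul_bernsteinPolynomial_eval_le {n : ℕ} {s : Finset ℕ} (hs : s ⊆ range (n + 1))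
    (x : unitInterval) :
    (∑ j ∈ s, ((n : ℝ) * x - j) * (bernsteinPolynomial ℝ n j).eval (x : ℝ)) ^ 2 ≤
      n * (x * (1 - x)) := by
  set B : ℕ → ℝ := fun j => (bernsteinPolynomial ℝ n j).eval (x : ℝ)
  have hB (j : ℕ) : 0 ≤ B j := bernsteinPolynomial_eval_nonneg n j x
  have hsum : ∑ j ∈ range (n + 1), B j = 1 := by
    simpa only [Polynomial.eval_finsetSum, Polynomial.eval_one] using
      congrArg (Polynomial.eval (x : ℝ)) (bernsteinPolynomial.sum ℝ n)
  have hvariance : ∑ j ∈ range (n + 1), ((n : ℝ) * x - j) ^ 2 * B j = n * (x * (1 - x)) := by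
    simpa [Polynomial.eval_finsetSum, mul_assoc] using
      congrArg (Polynomial.eval (x : ℝ)) (bernsteinPolynomial.variance ℝ n)
  calc (∑ j ∈ s, ((n : ℝ) * x - j) * B j) ^ 2
      ≤ (∑ j ∈ s, ((n : ℝ) * x - j) ^ 2 * B j) * ∑ j ∈ s, B j :=
        sum_sq_le_sum_mul_sum_of_sq_le_mul _ (fun j _ => mul_nonneg (sq_nonneg _) (hB j))
          (fun j _ => hB j) fun j _ => le_of_eq (by ring)
    _ ≤ (∑ j ∈ range (n + 1), ((n : ℝ) * x - j) ^ 2 * B j) * ∑ j ∈ range (n + 1), B j :=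
        mul_le_mul (sum_le_sum_of_subset_of_nonneg hs fun j _ _ => mul_nonneg (sq_nonneg _) (hB j))
          (sum_le_sum_of_subset_of_nonneg hs fun j _ _ => hB j) (sum_nonneg fun j _ => hB j)
          (sum_nonneg fun j _ => mul_nonneg (sq_nonneg _) (hB j))
    _ = n * (x * (1 - x)) := by rw [hsum, hvariance, mul_one]

lemma mul_bernsteinPolynomial_eval_sq_le_one (n J : ℕ) (x : unitInterval) :
    ((n : ℝ) + 1) * (x * (1 - x)) * (bernsteinPolynomial ℝ n J).eval (x : ℝ) ^ 2 ≤ 1 := by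
  obtain hJ | hJ := lt_or_ge n J
  · simp [bernsteinPolynomial.eq_zero_of_lt ℝ hJ]
  set b := (bernsteinPolynomial ℝ n J).eval (x : ℝ)
  set V : ℝ := (n + 1) * (x * (1 - x))
  have htelescope : ∑ j ∈ range (J + 1),
      ((n + 1 : ℕ) * (x : ℝ) - j) * (bernsteinPolynomial ℝ (n + 1) j).eval (x : ℝ) = V * b := by
    simpa [Polynomial.eval_finsetSum, V, mul_assoc] using
      congrArg (Polynomial.eval (x : ℝ)) (sum_range_sub_mul_bernsteinPolynomial (R := ℝ) n J)
  have hsq : (V * b) ^ 2 ≤ V := by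
    rw [← htelescope]
    simpa only [V, Nat.cast_add_one] using sq_sum_sub_mul_bernsteinPolynomial_eval_le
      (range_subset_range.2 (by omega : J + 1 ≤ n + 1 + 1)) x
  have hV : 0 ≤ V := (sq_nonneg _).trans hsq
  obtain hV | hV := hV.eq_or_lt
  · simp [← hV]
  · exact le_of_mul_le_mul_left (by linarith [mul_pow V b 2]) hV

lemma binomial_real_singleton_eq_bernsteinPolynomial_eval (n j : ℕ) (p : unitInterval) :
    Bin(n, p).real {j} = (bernsteinPolynomial ℝ n j).eval (p : ℝ) := by
  simp [binomial_real_singleton, bernsteinPolynomial]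

lemma sqrt_mul_binomial_real_le_card (n : ℕ) (p : unitInterval) (B : Finset ℕ) :
    √((n + 1) * (p * (1 - p))) * Bin(n, p).real B ≤ #B := by
  have hsingleton (j : ℕ) : √((n + 1) * (p * (1 - p))) * Bin(n, p).real {j} ≤ 1 := by
    rw [← Real.sqrt_sq (measureReal_nonneg (s := {j})), ← Real.sqrt_mul' _ (sq_nonneg _),
      binomial_real_singleton_eq_bernsteinPolynomial_eval]
    exact Real.sqrt_le_one.2 (mul_bernsteinPolynomial_eval_sq_le_one n j p)
  rw [← sum_measureReal_singleton, mul_sum]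
  simpa using sum_le_card_nsmul B _ 1 fun j _ => hsingleton j

/-! ### Random disjoint blocks -/

lemma expect_smul_eq_expect {G X M : Type*} [Group G] [Fintype G] [Fintype X] [MulAction G X]
    [MulAction.IsPretransitive G X] [AddCommMonoid M] [Module ℚ≥0 M] (f : X → M) (x : X) :
    𝔼 g : G, f (g • x) = 𝔼 y, f y := by
  have hx : Nonempty X := ⟨x⟩
  have hconst (y : X) : 𝔼 g : G, f (g • y) = 𝔼 g : G, f (g • x) := by
    obtain ⟨h, rfl⟩ := MulAction.exists_smul_eq G x y
    exact Fintype.expect_equiv (Equiv.mulRight h) _ _ fun g => by simp [mul_smul]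
  calc 𝔼 g : G, f (g • x)
      = 𝔼 y, 𝔼 g : G, f (g • y) := by simp only [hconst, Fintype.expect_const]
    _ = 𝔼 g : G, 𝔼 y, f (g • y) := expect_comm _ _ _
    _ = 𝔼 _g : G, 𝔼 y, f y := expect_congr rfl fun g _ =>
        Fintype.expect_equiv (MulAction.toPerm g) _ _ fun _ => rfl
    _ = 𝔼 y, f y := Fintype.expect_const _

lemma expect_map_perm {α M : Type*} [Fintype α] [DecidableEq α] [AddCommMonoid M] [Module ℚ≥0 M]
    (f : Finset α → M) (B : Finset α) :
    𝔼 σ : Equiv.Perm α, f (B.map σ.toEmbedding) = 𝔼 S ∈ univ.powersetCard #B, f S := by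
  have := Set.powersetCard.isPretransitive (α := α) (n := #B)
  calc 𝔼 σ : Equiv.Perm α, f (B.map σ.toEmbedding)
      = 𝔼 σ : Equiv.Perm α, f (σ • (⟨B, rfl⟩ : Set.powersetCard α #B) : Set.powersetCard α #B) := by
        simp [map_eq_image, Finset.smul_finset_def]
    _ = 𝔼 S : Set.powersetCard α #B, f S :=
        expect_smul_eq_expect (fun S : Set.powersetCard α #B => f S) _
    _ = 𝔼 S ∈ univ.powersetCard #B, f S :=
        expect_nbij Subtype.val (fun S _ => mem_powersetCard.2 ⟨subset_univ _, S.2⟩)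
          (fun _ _ => rfl) Subtype.val_injective.injOn
          fun S hS => ⟨⟨S, (mem_powersetCard.1 hS).2⟩, mem_coe.2 (mem_univ _), rfl⟩

lemma exists_pairwise_disjoint_card_eq {V : Type*} [Fintype V] {m t : ℕ}
    (h : m * t ≤ Fintype.card V) :
    ∃ B : Fin m → Finset V, Pairwise (Function.onFun Disjoint B) ∧ ∀ i, #(B i) = t := by
  obtain ⟨e⟩ : Nonempty (Fin m × Fin t ↪ V) :=
    Function.Embedding.nonempty_of_card_le (by simpa using h)
  refine ⟨fun i => univ.map ((Function.Embedding.sectR i (Fin t)).trans e), fun i j hij => ?_,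
    fun i => by simp⟩
  rw [Function.onFun, disjoint_left]
  simp [hij.symm]

lemma exists_perm_disjoint_blocks {V : Type*} [DecidableEq V] {U : Finset V} {m t : ℕ}
    (h : m * t ≤ #U) :
    ∃ T : Equiv.Perm U → Fin m → Finset V, (∀ σ i, T σ i ∈ U.powersetCard t) ∧
      (∀ σ, Pairwise (Function.onFun Disjoint (T σ))) ∧
      ∀ (f : Finset V → ℝ) i, 𝔼 σ, f (T σ i) = 𝔼 S ∈ U.powersetCard t, f S := by
  obtain ⟨B, hB, hBcard⟩ := exists_pairwise_disjoint_card_eq (V := U) (by simpa using h)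
  have hU : (univ.powersetCard t : Finset (Finset U)).map
      (mapEmbedding (Function.Embedding.subtype _)).toEmbedding = U.powersetCard t := by
    rw [← powersetCard_map, ← attach_eq_univ, attach_map_val]
  refine ⟨fun σ i => ((B i).map σ.toEmbedding).map (Function.Embedding.subtype _), fun σ i => ?_,
    fun σ i j hij => ?_, fun f i => ?_⟩
  · exact mem_powersetCard.2 ⟨map_subtype_subset _, by simp [hBcard]⟩
  · simpa [Function.onFun] using hB hij
  · rw [expect_map_perm fun S => f (S.map (Function.Embedding.subtype _)), hBcard, ← hU]
    simp only [Finset.expect, card_map, sum_map]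
    rfl

/-! ### Edges gained by enlarging a vertex set -/

/-- The unordered pairs, loops included, contained in `S ∪ T` but not in `S`: the potential edges
gained when the vertex set `S` is enlarged by `T`. -/
def gainedPairs {V : Type*} [DecidableEq V] (S T : Finset V) : Finset (Sym2 V) :=
  (S ∪ T).sym2 \ S.sym2

lemma disjoint_gainedPairs {V : Type*} [DecidableEq V] (S : Finset V) {T T' : Finset V}
    (h : Disjoint T T') : Disjoint (gainedPairs S T) (gainedPairs S T') := by
  simp only [gainedPairs, disjoint_left, mem_sdiff, mem_sym2_iff, mem_union, not_and, not_not]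
  intro e ⟨hT, _⟩ hT' v hv
  by_contra hvS
  exact disjoint_left.1 h ((hT v hv).resolve_left hvS) ((hT' v hv).resolve_left hvS)

section EdgesIn

variable {n : ℕ}

lemma edgesIn_eq_card_inter_sym2 (G : Finset (Sym2 (Fin n))) (S : Finset (Fin n)) :
    edgesIn G S = #(G ∩ S.sym2) := by
  simp only [edgesIn, ← mem_sym2_iff, filter_mem_eq_inter]

lemma edgesIn_union (G : Finset (Sym2 (Fin n))) (S T : Finset (Fin n)) :
    edgesIn G (S ∪ T) = edgesIn G S + #(G ∩ gainedPairs S T) := by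
  have hsub : S.sym2 ⊆ (S ∪ T).sym2 := sym2_mono subset_union_left
  rw [edgesIn_eq_card_inter_sym2, edgesIn_eq_card_inter_sym2, gainedPairs,
    ← card_union_of_disjoint (disjoint_sdiff.mono inter_subset_right inter_subset_right),
    ← inter_union_distrib_left, union_sdiff_of_subset hsub]

lemma edgesIn_completeEdges (S : Finset (Fin n)) :
    edgesIn (completeEdges n) S = (#S).choose 2 := by
  rw [edgesIn_eq_card_inter_sym2, inter_comm, ← Sym2.card_image_offDiag,
    ← Sym2.filter_image_mk_not_isDiag, ← sym2_eq_image]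
  congr 1
  ext e
  simp [completeEdges]

lemma choose_two_add (s t : ℕ) : (s + t).choose 2 = s.choose 2 + (s * t + t * (t - 1) / 2) := by
  rw [← Nat.choose_two_right t, Nat.add_choose_eq, Nat.sum_antidiagonal_eq_sum_range_succ_mk]
  simp [sum_range_succ]
  ring

lemma card_completeEdges_inter_gainedPairs {S T : Finset (Fin n)} (h : Disjoint S T) :
    #(completeEdges n ∩ gainedPairs S T) = #S * #T + #T * (#T - 1) / 2 := by
  have hunion := edgesIn_union (completeEdges n) S T
  rw [edgesIn_completeEdges, edgesIn_completeEdges, card_union_of_disjoint h, choose_two_add]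
    at hunion
  exact (Nat.add_left_cancel hunion).symm

end EdgesIn

lemma measureReal_tolerance_lt_abs_Pru_ncard_inter_sub_le {ι κ : Type*} [Fintype ι] [Nonempty ι]
    [Countable κ] (u : Set κ) (p : unitInterval) {F : ι → Set κ} {B : Set ℕ} {n ν : ℕ}
    {β ε C : ℝ} (hn : 1 ≤ n) (hβ : 0 ≤ β) (hF : Pairwise (Function.onFun Disjoint F))
    (hfin : ∀ i, (F i).Finite) (hcard : ∀ i, (u ∩ F i).ncard = ν)
    (hmean : Fintype.card ι * Bin(ν, p).real B ≤ C * (n : ℝ) ^ (2 * β)) :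
    setBer(u, p).real {s | tolerance n (Fintype.card ι) β ε (Bin(ν, p).real B) <
        |Pru univ (fun i => (s ∩ F i).ncard ∈ B) - Bin(ν, p).real B|} ≤
      2 * Real.exp (C - (n : ℝ) ^ ε) := by
  have hcount (i : ι) : Measurable fun s : Set κ => (s ∩ F i).ncard :=
    measurable_ncard.comp (measurable_set_inter_right (F i))
  refine measureReal_tolerance_lt_abs_Pru_sub_le hn hβ (fun i => hcount i .of_discrete)
    (iIndepSet_ncard_inter_setBernoulli u p hF B) (fun i => ?_) hmean
  rw [← hcard i, ← map_ncard_inter_setBernoulli u p (hfin i),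
    map_measureReal_apply (hcount i) .of_discrete]
  rfl

/-- `P_T(e(S ∪ T) - e(S) ∈ B)` for a uniformly random `t`-element subset `T` of the complement
of `S`, where `e` counts the edges of the graph with edge set `s`. -/
def gainProb {n : ℕ} (s : Set (Sym2 (Fin n))) (S : Finset (Fin n)) (t : ℕ) (B : Set ℕ) : ℝ :=
  Pru (Sᶜ.powersetCard t) fun T => (s ∩ gainedPairs S T).ncard ∈ B

section GainProb

variable {n : ℕ} {p : unitInterval} {S : Finset (Fin n)} {B : Set ℕ} {m t ν : ℕ} {β ε C : ℝ}

lemma Pru_edgesIn_union_sub_edgesIn (s : Set (Sym2 (Fin n))) (S : Finset (Fin n)) (t : ℕ)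
    (I : Set ℝ) :
    Pru (Sᶜ.powersetCard t) (fun T => (edgesIn s.toFinite.toFinset (S ∪ T) : ℝ) -
      edgesIn s.toFinite.toFinset S ∈ I) = gainProb s S t (Nat.cast ⁻¹' I) := by
  refine Pru_congr fun T _ => ?_
  rw [edgesIn_union, Nat.cast_add, add_sub_cancel_left, ← Set.ncard_coe_finset, coe_inter,
    Set.Finite.coe_toFinset]
  rfl

lemma gainProb_congr (s : Set (Sym2 (Fin n))) (S : Finset (Fin n)) (t : ℕ) {B' : Set ℕ}
    (h : ∀ j ≤ Fintype.card (Sym2 (Fin n)), j ∈ B ↔ j ∈ B') :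
    gainProb s S t B = gainProb s S t B' :=
  Pru_congr fun _ _ => h _ <| Nat.card_eq_fintype_card (α := Sym2 (Fin n)) ▸ Set.ncard_le_card _

lemma gainProb_eq_expect_Pru (s : Set (Sym2 (Fin n))) {ι K : Type*} [Fintype ι] [Nonempty ι]
    [Fintype K] {T : K → ι → Finset (Fin n)}
    (hT : ∀ (f : Finset (Fin n) → ℝ) i, 𝔼 σ, f (T σ i) = 𝔼 T ∈ Sᶜ.powersetCard t, f T) :
    gainProb s S t B = 𝔼 σ, Pru univ (fun i => (s ∩ gainedPairs S (T σ i)).ncard ∈ B) := by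
  simp only [gainProb, Pru_eq_expect]
  rw [expect_comm, ← Fintype.expect_const (ι := ι) (𝔼 T ∈ Sᶜ.powersetCard t, _)]
  exact expect_congr rfl fun i _ => (hT _ i).symm

lemma measureReal_tolerance_lt_abs_Pru_ncard_inter_gainedPairs_sub_le {ι : Type*} [Fintype ι]
    [Nonempty ι] {T : ι → Finset (Fin n)} (hn : 1 ≤ n) (hβ : 0 ≤ β)
    (hν : #S * t + t * (t - 1) / 2 = ν) (hT : ∀ i, T i ∈ Sᶜ.powersetCard t)
    (hdisj : Pairwise (Function.onFun Disjoint T))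
    (hmean : Fintype.card ι * Bin(ν, p).real B ≤ C * (n : ℝ) ^ (2 * β)) :
    setBer((completeEdges n : Set (Sym2 (Fin n))), p).real
        {s | tolerance n (Fintype.card ι) β ε (Bin(ν, p).real B) <
          |Pru univ (fun i => (s ∩ gainedPairs S (T i)).ncard ∈ B) - Bin(ν, p).real B|} ≤
      2 * Real.exp (C - (n : ℝ) ^ ε) := by
  refine measureReal_tolerance_lt_abs_Pru_ncard_inter_sub_le _ p hn hβ
    (fun i j hij => disjoint_coe.2 (disjoint_gainedPairs S (hdisj hij)))
    (fun i => Finset.finite_toSet _) (fun i => ?_) hmean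
  obtain ⟨hsub, hcard⟩ := mem_powersetCard.1 (hT i)
  rw [← coe_inter, Set.ncard_coe_finset,
    card_completeEdges_inter_gainedPairs (disjoint_compl_right.mono_right hsub), hcard, hν]

lemma measureReal_tolerance_add_lt_abs_gainProb_sub_le {γ : ℝ} (hn : 1 ≤ n) (hβ : 0 ≤ β)
    (hγ : 0 < γ) (hm : 0 < m) (hmt : m * t ≤ #Sᶜ) (hν : #S * t + t * (t - 1) / 2 = ν)
    (hmean : m * Bin(ν, p).real B ≤ C * (n : ℝ) ^ (2 * β)) :
    setBer((completeEdges n : Set (Sym2 (Fin n))), p).real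
        {s | tolerance n m β ε (Bin(ν, p).real B) + γ <
          |gainProb s S t B - Bin(ν, p).real B|} ≤
      2 * Real.exp (C - (n : ℝ) ^ ε) / γ := by
  have : Nonempty (Fin m) := ⟨⟨0, hm⟩⟩
  obtain ⟨T, hTU, hTdisj, hTexp⟩ := exists_perm_disjoint_blocks hmt
  set q := Bin(ν, p).real B
  have hblock (σ : Equiv.Perm ↥Sᶜ) : setBer((completeEdges n : Set (Sym2 (Fin n))), p).real
      {s | tolerance n m β ε q <
        |Pru univ (fun i => (s ∩ gainedPairs S (T σ i)).ncard ∈ B) - q|} ≤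
      2 * Real.exp (C - (n : ℝ) ^ ε) := by
    simpa only [Fintype.card_fin] using
      measureReal_tolerance_lt_abs_Pru_ncard_inter_gainedPairs_sub_le (ε := ε) hn hβ hν (hTU σ)
        (hTdisj σ) (by simpa only [Fintype.card_fin] using hmean)
  refine le_trans (measureReal_mono fun s hs => ?_) (measureReal_lt_Pru_le hγ (by positivity)
    (fun σ (_ : σ ∈ univ) => .of_discrete) fun σ _ => hblock σ)
  have habs := abs_expect_sub_le
    (f := fun σ => Pru univ fun i => (s ∩ gainedPairs S (T σ i)).ncard ∈ B) (q := q)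
    (fun σ => ⟨Pru_nonneg _ _, Pru_le_one _ _⟩) ⟨measureReal_nonneg, measureReal_le_one⟩
    (tolerance_nonneg n m β ε q)
  rw [← gainProb_eq_expect_Pru s hTexp] at habs
  exact lt_of_add_lt_add_left (lt_of_lt_of_le hs habs)

end GainProb

lemma binomial_real_congr {ν : ℕ} (p : unitInterval) {B B' : Set ℕ}
    (h : ∀ j ≤ ν, j ∈ B ↔ j ∈ B') : Bin(ν, p).real B = Bin(ν, p).real B' :=
  measureReal_congr <| (ae_le_of_hasLaw_binomial .id).mono fun j hj => propext (h j hj)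

lemma mul_binomial_real_le_mul_rpow {n m t ν : ℕ} {p : unitInterval} {B : Finset ℕ} {β c : ℝ}
    (hn : 0 < n) (ht : 0 < t) (hc : 0 < c) (hmt : m * t ≤ n)
    (hν : c * (n * t) ≤ (ν + 1) * (p * (1 - p)))
    (hB : #B ≤ (t : ℝ) ^ ((3 : ℝ) / 2) * (n : ℝ) ^ (2 * β - 1 / 2)) :
    m * Bin(ν, p).real B ≤ 1 / √c * (n : ℝ) ^ (2 * β) := by
  have hn0 : (0 : ℝ) < n := by positivity
  have ht0 : (0 : ℝ) < t := by positivity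
  have hanti : √c * (√n * √t) * Bin(ν, p).real B ≤ #B := by
    rw [← Real.sqrt_mul hn0.le, ← Real.sqrt_mul hc.le]
    exact (mul_le_mul_of_nonneg_right (Real.sqrt_le_sqrt hν) measureReal_nonneg).trans
      (sqrt_mul_binomial_real_le_card ν p B)
  have hpow : (t : ℝ) ^ ((3 : ℝ) / 2) * (n : ℝ) ^ (2 * β - 1 / 2) =
      t * √t * ((n : ℝ) ^ (2 * β) / √n) := by
    rw [Real.rpow_sub hn0, ← Real.sqrt_eq_rpow, show (3 : ℝ) / 2 = 1 + 1 / 2 by norm_num,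
      Real.rpow_add ht0, Real.rpow_one, ← Real.sqrt_eq_rpow]
  have hq : Bin(ν, p).real B ≤ 1 / √c * (n : ℝ) ^ (2 * β) * (t / n) := by
    rw [← le_div_iff₀' (by positivity)] at hanti
    refine hanti.trans ?_
    rw [div_le_iff₀ (by positivity)]
    refine hB.trans_eq ?_
    rw [hpow]
    field_simp
    rw [Real.sq_sqrt hn0.le]
  calc m * Bin(ν, p).real B ≤ m * (1 / √c * (n : ℝ) ^ (2 * β) * (t / n)) := by gcongr
    _ = 1 / √c * (n : ℝ) ^ (2 * β) * ((m * t) / n) := by ring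
    _ ≤ 1 / √c * (n : ℝ) ^ (2 * β) * 1 := by
        gcongr
        exact div_le_one_of_le₀ (mod_cast hmt) hn0.le
    _ = _ := mul_one _

lemma add_mul_le_four_mul (r t : ℕ) : (r + t) * t ≤ 4 * (r * t + t * (t - 1) / 2 + 1) := by
  obtain _ | t := t
  · simp
  have heven : t * (t + 1) / 2 * 2 = t * (t + 1) :=
    Nat.div_mul_cancel (Nat.even_mul_succ_self t).two_dvd
  rw [Nat.add_sub_cancel, mul_comm (t + 1)]
  nlinarith

lemma cube_div_four_mul_le_succ_mul {δ p : ℝ} {n r t : ℕ} (hδ : 0 ≤ δ) (hδp : δ ≤ p)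
    (hpδ : p ≤ 1 - δ) (hn : δ * n ≤ (r + t : ℕ)) :
    δ ^ 3 / 4 * (n * t) ≤ ((r * t + t * (t - 1) / 2 : ℕ) + 1) * (p * (1 - p)) := by
  have hcount : δ * n * t ≤ 4 * ((r * t + t * (t - 1) / 2 : ℕ) + 1) :=
    calc δ * n * t ≤ (r + t : ℕ) * t := by gcongr
      _ ≤ _ := mod_cast add_mul_le_four_mul r t
  have hvar : δ * δ ≤ p * (1 - p) := mul_le_mul hδp (by linarith) hδ (hδ.trans hδp)
  calc δ ^ 3 / 4 * (n * t) = δ * n * t / 4 * (δ * δ) := by ring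
    _ ≤ _ := mul_le_mul (by linarith) hvar (mul_self_nonneg δ) (by positivity)

/-- The integer intervals contained in `{0, …, M - 1}`. -/
def natIntervals (M : ℕ) : Finset (Finset ℕ) :=
  (range (M + 1) ×ˢ range (M + 1)).image fun x => Ico x.1 x.2

lemma card_natIntervals_le (M : ℕ) : #(natIntervals M) ≤ (M + 1) ^ 2 :=
  card_image_le.trans_eq (by simp [sq])

lemma exists_mem_natIntervals_preimage_Ico (z : ℝ) (a M : ℕ) :
    ∃ B ∈ natIntervals M, #B ≤ a ∧
      ∀ j < M, j ∈ (Nat.cast ⁻¹' Set.Ico z (z + a) : Set ℕ) ↔ j ∈ B := by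
  have hceil : ⌈z + a⌉₊ ≤ ⌈z⌉₊ + a := (Nat.ceil_add_le z a).trans_eq (by rw [Nat.ceil_natCast])
  refine ⟨Ico (min ⌈z⌉₊ M) (min ⌈z + a⌉₊ M), mem_image.2 ⟨(_, _), ?_, rfl⟩, ?_, fun j hj => ?_⟩
  · simp
  · rw [Nat.card_Ico]
    omega
  · rw [Nat.preimage_Ico, mem_Ico, Set.mem_Ico]
    omega

/-- The proportion of `r`-element sets `S` for which `P_T(e(S ∪ T) - e(S) ∈ B)` differs from its
binomial prediction by more than `Δ_B + e^{-n^ε/2}`. -/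
def atypicalProportion {n : ℕ} (s : Set (Sym2 (Fin n))) (p : unitInterval) (r t m : ℕ) (β ε : ℝ)
    (B : Set ℕ) : ℝ :=
  let q := Bin(r * t + t * (t - 1) / 2, p).real B
  Pru (kSets n r) fun S =>
    tolerance n m β ε q + Real.exp (-(n : ℝ) ^ ε / 2) < |gainProb s S t B - q|

section AtypicalProportion

variable {n r t m : ℕ} {p : unitInterval} {β ε C : ℝ}

lemma Pru_not_abs_sub_le_eq_atypicalProportion (s : Set (Sym2 (Fin n))) (p : unitInterval)
    (r t m : ℕ) (β ε : ℝ) (I : Set ℝ) :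
    Pru (kSets n r) (fun S => ¬ |Pru (Sᶜ.powersetCard t) (fun T =>
          (edgesIn s.toFinite.toFinset (S ∪ T) : ℝ) - edgesIn s.toFinite.toFinset S ∈ I) -
        binomPr (r * t + t * (t - 1) / 2) p (fun j => (j : ℝ) ∈ I)| ≤
      tolerance n m β ε (binomPr (r * t + t * (t - 1) / 2) p fun j => (j : ℝ) ∈ I) +
        Real.exp (-(n : ℝ) ^ ε / 2)) =
      atypicalProportion s p r t m β ε (Nat.cast ⁻¹' I) := by
  simp only [Pru_edgesIn_union_sub_edgesIn, binomPr_eq_binomial_real, not_le]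
  rfl

lemma atypicalProportion_congr (s : Set (Sym2 (Fin n))) (hrt : r + t ≤ n) {B B' : Set ℕ}
    (h : ∀ j ≤ Fintype.card (Sym2 (Fin n)), j ∈ B ↔ j ∈ B') :
    atypicalProportion s p r t m β ε B = atypicalProportion s p r t m β ε B' := by
  have hν : r * t + t * (t - 1) / 2 ≤ Fintype.card (Sym2 (Fin n)) :=
    calc _ ≤ (r + t).choose 2 := by rw [choose_two_add]; exact Nat.le_add_left _ _
      _ ≤ (n + 1).choose 2 := Nat.choose_le_choose 2 (by omega)
      _ = _ := by rw [Sym2.card, Fintype.card_fin]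
  simp only [atypicalProportion, gainProb_congr s _ t h,
    binomial_real_congr p fun j hj => h j (hj.trans hν)]

lemma measureReal_exp_lt_atypicalProportion_le {B : Set ℕ} (hn : 1 ≤ n) (hβ : 0 ≤ β) (hm : 0 < m)
    (hmt : m * t ≤ n - r)
    (hmean : m * Bin(r * t + t * (t - 1) / 2, p).real B ≤ C * (n : ℝ) ^ (2 * β)) :
    setBer((completeEdges n : Set (Sym2 (Fin n))), p).real
        {s | Real.exp (-(n : ℝ) ^ ε / 4) < atypicalProportion s p r t m β ε B} ≤
      2 * Real.exp (C - (n : ℝ) ^ ε / 4) := by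
  refine (measureReal_lt_Pru_le (Real.exp_pos _) (by positivity) (fun S _ => .of_discrete)
    fun S hS => measureReal_tolerance_add_lt_abs_gainProb_sub_le hn hβ (Real.exp_pos _) hm
      (hmt.trans_eq ?_) (by rw [(mem_powersetCard.1 hS).2]) hmean).trans_eq ?_
  · rw [card_compl, Fintype.card_fin, (mem_powersetCard.1 hS).2]
  · rw [mul_div_assoc, mul_div_assoc, ← Real.exp_sub, ← Real.exp_sub]
    ring_nf

lemma card_natIntervals_card_sym2_le (hn : 1 ≤ n) :
    (#(natIntervals (Fintype.card (Sym2 (Fin n)) + 1)) : ℝ) ≤ 9 * (n : ℝ) ^ 4 := by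
  have hsym2 : Fintype.card (Sym2 (Fin n)) ≤ n ^ 2 := by
    rw [Sym2.card, Fintype.card_fin, Nat.choose_two_right, Nat.add_sub_cancel]
    exact Nat.div_le_of_le_mul (by nlinarith)
  have hM : Fintype.card (Sym2 (Fin n)) + 1 + 1 ≤ 3 * n ^ 2 := by nlinarith
  calc (#(natIntervals (Fintype.card (Sym2 (Fin n)) + 1)) : ℝ) ≤ ((3 * n ^ 2) ^ 2 : ℕ) :=
        mod_cast (card_natIntervals_le _).trans (Nat.pow_le_pow_left hM 2)
    _ = 9 * (n : ℝ) ^ 4 := by push_cast; ring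

lemma measureReal_exists_exp_lt_atypicalProportion_le {a : ℕ} (hn : 1 ≤ n) (hβ : 0 ≤ β)
    (hm : 0 < m) (hmt : m * t ≤ n - r) (hrt : r + t ≤ n)
    (hmean : ∀ B : Finset ℕ, #B ≤ a →
      m * Bin(r * t + t * (t - 1) / 2, p).real B ≤ C * (n : ℝ) ^ (2 * β)) :
    setBer((completeEdges n : Set (Sym2 (Fin n))), p).real
        {s | ∃ z : ℝ, Real.exp (-(n : ℝ) ^ ε / 4) <
          atypicalProportion s p r t m β ε (Nat.cast ⁻¹' Set.Ico z (z + a))} ≤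
      18 * Real.exp C * (n : ℝ) ^ 4 * Real.exp (-(n : ℝ) ^ ε / 4) := by
  set M := Fintype.card (Sym2 (Fin n)) + 1
  set bad : Finset ℕ → Set (Set (Sym2 (Fin n))) := fun B =>
    {s | Real.exp (-(n : ℝ) ^ ε / 4) < atypicalProportion s p r t m β ε B}
  have hcover : {s | ∃ z : ℝ, Real.exp (-(n : ℝ) ^ ε / 4) <
      atypicalProportion s p r t m β ε (Nat.cast ⁻¹' Set.Ico z (z + a))} ⊆
      ⋃ B ∈ {B ∈ natIntervals M | #B ≤ a}, bad B := by
    rintro s ⟨z, hz⟩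
    obtain ⟨B, hBM, hBa, hB⟩ := exists_mem_natIntervals_preimage_Ico z a M
    rw [atypicalProportion_congr s hrt fun j hj => hB j (Nat.lt_succ_of_le hj)] at hz
    exact Set.mem_biUnion (mem_coe.2 (mem_filter.2 ⟨hBM, hBa⟩)) hz
  calc _ ≤ ∑ B ∈ natIntervals M with #B ≤ a,
          setBer((completeEdges n : Set (Sym2 (Fin n))), p).real (bad B) :=
        (measureReal_mono hcover (measure_ne_top _ _)).trans (measureReal_biUnion_finset_le _ _)
    _ ≤ #{B ∈ natIntervals M | #B ≤ a} • (2 * Real.exp (C - (n : ℝ) ^ ε / 4)) :=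
        sum_le_card_nsmul _ _ _ fun B hB =>
          measureReal_exp_lt_atypicalProportion_le hn hβ hm hmt (hmean B (mem_filter.1 hB).2)
    _ ≤ 9 * (n : ℝ) ^ 4 * (2 * Real.exp (C - (n : ℝ) ^ ε / 4)) := by
        rw [nsmul_eq_mul]
        gcongr
        exact (Nat.cast_le.2 (card_filter_le _ _)).trans (card_natIntervals_card_sym2_le hn)
    _ = _ := by
        rw [sub_eq_add_neg, Real.exp_add, neg_div]
        ring

end AtypicalProportion

lemma eventually_mul_rpow_mul_exp_neg_le (C κ : ℝ) {ε : ℝ} (hε : 0 < ε) :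
    ∀ᶠ x : ℝ in Filter.atTop,
      C * x ^ κ * Real.exp (-x ^ ε / 4) ≤ Real.exp (-x ^ (ε / 2)) := by
  have hε2 : 0 < ε / 2 := half_pos hε
  have hlim := ((tendsto_rpow_mul_exp_neg_mul_atTop_nhds_zero (κ / (ε / 2)) 1 one_pos).comp
    (tendsto_rpow_atTop hε2)).const_mul C
  rw [mul_zero] at hlim
  filter_upwards [hlim.eventually_le_const one_pos, Filter.eventually_gt_atTop 0,
    (tendsto_rpow_atTop hε2).eventually_ge_atTop 8] with x hx hx0 hx8
  set y := x ^ (ε / 2) with hy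
  have hxε : x ^ ε = y ^ 2 := by rw [hy, ← Real.rpow_mul_natCast hx0.le]; norm_num
  have hxκ : y ^ (κ / (ε / 2)) = x ^ κ := by
    rw [hy, ← Real.rpow_mul hx0.le, mul_div_cancel₀ _ hε2.ne']
  rw [Function.comp_apply, hxκ, ← mul_assoc, neg_one_mul] at hx
  calc C * x ^ κ * Real.exp (-x ^ ε / 4)
      = C * x ^ κ * Real.exp (-y) * Real.exp (y - y ^ 2 / 4) := by
        rw [hxε, mul_assoc (C * x ^ κ), ← Real.exp_add]
        ring_nf
    _ ≤ 1 * Real.exp (y - y ^ 2 / 4) := by gcongr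
    _ ≤ Real.exp (-y) := by
        rw [one_mul, Real.exp_le_exp]
        nlinarith

theorem stmt_15_general (δ β ε : ℝ) (hδ : 0 < δ) (hβ : 0 ≤ β) (hε : 0 < ε) :
    ∃ η > (0 : ℝ), ∃ n₀ : ℕ, ∀ n ≥ n₀, ∀ p : ℝ, δ ≤ p → p ≤ 1 - δ →
      ∀ k : ℕ, δ ≤ (k : ℝ) / n → (k : ℝ) / n ≤ 1 →
      ∀ a t : ℕ, 0 < t → t ≤ k →
      (a : ℝ) ≤ (t : ℝ) ^ ((3 : ℝ) / 2) * (n : ℝ) ^ (2 * β - 1 / 2) →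
      let m : ℕ := (n - k + t) / t
      PrGnp n p (fun G => ∀ z : ℝ,
          let PY : ℝ := binomPr ((k - t) * t + t * (t - 1) / 2) p
            (fun j => (j : ℝ) ∈ Set.Ico z (z + a))
          let ΔA : ℝ := if PY ≤ Real.exp (-(n : ℝ) ^ ε) / m then Real.exp (-(n : ℝ) ^ ε) / m
            else (n : ℝ) ^ (β + ε) / m
          Pru (kSets n (k - t)) (fun S' =>
              ¬ (|Pru (S'ᶜ.powersetCard t)
                    (fun T => ((edgesIn G (S' ∪ T) : ℝ) - (edgesIn G S' : ℝ))
                      ∈ Set.Ico z (z + a)) - PY|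
                  ≤ ΔA + Real.exp (-(n : ℝ) ^ ε / 2)))
            ≤ Real.exp (-(n : ℝ) ^ ε / 4))
        ≥ 1 - Real.exp (-(n : ℝ) ^ η) := by
  obtain ⟨n₀, hn₀⟩ := Filter.eventually_atTop.1 <| tendsto_natCast_atTop_atTop.eventually <|
    eventually_mul_rpow_mul_exp_neg_le (18 * Real.exp (1 / √(δ ^ 3 / 4))) 4 hε
  refine ⟨ε / 2, half_pos hε, max n₀ 1, ?_⟩
  intro n hn p hδp hpδ k hδk hkn a t ht htk ha m
  have hn1 : 1 ≤ n := (le_max_right _ _).trans hn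
  have hn0 : (0 : ℝ) < n := mod_cast hn1
  replace hkn : k ≤ n := mod_cast (div_le_one hn0).1 hkn
  lift p to unitInterval using ⟨hδ.le.trans hδp, hpδ.trans (sub_le_self _ hδ.le)⟩
  have hmt : m * t ≤ n - (k - t) := (Nat.div_mul_le_self _ _).trans (by omega)
  have hδn : δ * n ≤ (k - t + t : ℕ) := by
    rwa [Nat.sub_add_cancel htk, ← le_div_iff₀ hn0]
  have hbad := measureReal_exists_exp_lt_atypicalProportion_le (ε := ε) hn1 hβ
    (Nat.div_pos (Nat.le_add_left t _) ht) hmt (by omega) fun B hB =>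
      mul_binomial_real_le_mul_rpow hn1 ht (by positivity) (hmt.trans (Nat.sub_le _ _))
        (cube_div_four_mul_le_succ_mul hδ.le hδp hpδ hδn) ((Nat.cast_le.2 hB).trans ha)
  rw [ge_iff_le, PrGnp_eq_setBernoulli_real, sub_le_comm, ← probReal_compl_eq_one_sub .of_discrete]
  refine le_trans (measureReal_mono fun s hs => ?_)
    (hbad.trans (mod_cast hn₀ n ((le_max_left _ _).trans hn)))
  simp only [← Pru_not_abs_sub_le_eq_atypicalProportion, Set.mem_ofPred_eq, ← not_le, ← not_forall]
  exact hs

/-- Lemma 3.4: concentration for almost all `S'`.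
Fix `δ, β, ε > 0`. There are `η > 0` and `n₀` such that for all `n ≥ n₀`, `p ∈ [δ, 1-δ]`,
`k` with `k/n ∈ [δ, 1-δ]`, positive integers `a, t` with `t ≤ k/2` and
`a ≤ t^(3/2)·n^(2β-1/2)`: with probability at least `1 - exp(-n^η)` over `G_{n,p}`, for every
interval `A = [z, z+a)`, at most an `e^(-n^ε/4)` proportion of the `(k-t)`-sets `S'` fail
`|P_T(e(S'∪T) - e(S') ∈ A) - P(Y ∈ A)| ≤ Δ_A + e^(-n^ε/2)`, where `T` is a uniformly random
`t`-subset of `[n]∖S'`. -/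
theorem stmt_15 (δ β ε : ℝ) (hδ : 0 < δ) (hβ : 0 < β) (hε : 0 < ε) :
    ∃ η > (0:ℝ), ∃ n₀ : ℕ, ∀ n ≥ n₀, ∀ p : ℝ, δ ≤ p → p ≤ 1 - δ →
      ∀ k : ℕ, δ ≤ (k:ℝ)/n → (k:ℝ)/n ≤ 1 - δ →
      ∀ a t : ℕ, 0 < a → 0 < t → t ≤ k / 2 →
      (a : ℝ) ≤ (t:ℝ) ^ ((3:ℝ)/2) * (n:ℝ) ^ (2*β - 1/2) →
      let m : ℕ := (n - k + t) / t
      PrGnp n p (fun G => ∀ z : ℝ,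
          let PY : ℝ := binomPr ((k - t) * t + t * (t - 1) / 2) p
            (fun j => (j:ℝ) ∈ Set.Ico z (z + a))
          let ΔA : ℝ := if PY ≤ Real.exp (-(n:ℝ)^ε) / m then Real.exp (-(n:ℝ)^ε) / m
            else (n:ℝ)^(β+ε) / m
          Pru (kSets n (k - t)) (fun S' =>
              ¬ (|Pru (S'ᶜ.powersetCard t)
                    (fun T => ((edgesIn G (S' ∪ T) : ℝ) - (edgesIn G S' : ℝ))
                      ∈ Set.Ico z (z + a)) - PY|
                  ≤ ΔA + Real.exp (-(n:ℝ)^ε / 2)))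
            ≤ Real.exp (-(n:ℝ)^ε / 4))
        ≥ 1 - Real.exp (-(n:ℝ)^η) := by
  obtain ⟨η, hη, n₀, h⟩ := stmt_15_general δ β ε hδ hβ.le hε
  exact ⟨η, hη, n₀, fun n hn p hδp hpδ k hδk hkδ a t _ ht htk =>
    h n hn p hδp hpδ k hδk (by linarith) a t ht (by omega)⟩
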